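/- Let (Ω, F, P) be a probability space and h a random increasing homeomorphism of [0,1] (for each ω, h_ω : [0,1] → [0,1] is a strictly increasing continuous bijection with h_ω(0)=0, h_ω(1)=1, and ω ↦ h_ω(x) is measurable for each x). Let δ ∈ (0,2) and set η := 1 − δ/2 ∈ (0,1). Assume there is C > 0 such that E[|h(I)|^η] ≤ C|I|^{2η−η²} for every dyadic interval I ⊆ [0,1]. Then almost surely the set {x ∈ [0,1) : for every ε > 0, |h(I_n(x))| ≥ 2^{−n(δ+ε)} for infinitely many n} has Hausdorff dimension at most δ − δ²/4. -/

import Mathlib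

/-!
A first moment argument. Put `η = 1 - δ/2` and `D = δ - δ²/4`. For `ε > 0`, give each dyadic
interval `I` of generation `n` the random weight `|I|^(D + ε) * (2^(n(δ + ε)) * |h(I)|)^η`. When
`|h(I)| ≥ 2^(-n(δ + ε))` the second factor is at least one, so the weight dominates
`|I|^(D + ε)`. Since `2η - η² = 1 - δ²/4`, the moment hypothesis bounds the total expected weight
of generation `n` by `C * 2^(-nεδ/2)`, which is summable; hence almost surely the weights of all
dyadic intervals are summable (`ae_sum_weight_ne_top`). The tails of this sum bound the
`(D + ε)`-dimensional Hausdorff measure of the exceptional set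
(`hausdorffMeasure_eq_zero_of_frequently_cover`), which therefore vanishes. Letting `ε → 0` along
`1/(m + 1)` gives the dimension bound.
-/

open MeasureTheory Filter Set

/-- Left endpoint of the dyadic interval of generation `n` containing `x`. -/
noncomputable def dyadLeft (n : ℕ) (x : ℝ) : ℝ := (⌊x * 2 ^ n⌋ : ℝ) / 2 ^ n

/-- Right endpoint of the dyadic interval of generation `n` containing `x`. -/
noncomputable def dyadRight (n : ℕ) (x : ℝ) : ℝ := ((⌊x * 2 ^ n⌋ : ℝ) + 1) / 2 ^ n

open scoped ENNReal Topology

/-- A set whose points lie, for infinitely many generations `n`, in a selected dyadic interval is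
`s`-null as soon as the `s`-powers of the lengths of the selected intervals are dominated by a
summable family `W`. -/
lemma hausdorffMeasure_eq_zero_of_frequently_cover {s : ℝ} (hs : 0 < s) (G : ℕ → ℕ → Prop)
    (W : ℕ → ℕ → ℝ≥0∞) (E : Set ℝ)
    (hE : ∀ x ∈ E, ∃ᶠ n : ℕ in atTop, ∃ j < 2 ^ n, G n j ∧
      x ∈ Icc ((j:ℝ) / 2 ^ n) (((j:ℝ) + 1) / 2 ^ n))
    (hW : ∀ n j, j < 2 ^ n → G n j → ENNReal.ofReal ((2:ℝ) ^ (-(n:ℝ) * s)) ≤ W n j)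
    (hsum : ∑' n, ∑ j ∈ Finset.range (2 ^ n), W n j ≠ ∞) :
    Measure.hausdorffMeasure s E = 0 := by
  classical
  let t : (N : ℕ) → (Σ k : ℕ, Fin (2 ^ (k + N))) → Set ℝ := fun N i =>
    if G (i.1 + N) i.2 then
      Icc (((i.2 : ℕ):ℝ) / 2 ^ (i.1 + N)) ((((i.2 : ℕ):ℝ) + 1) / 2 ^ (i.1 + N)) else ∅
  have hdiam : ∀ (n j : ℕ), Metric.ediam (Icc ((j:ℝ) / 2 ^ n) (((j:ℝ) + 1) / 2 ^ n)) =
      ENNReal.ofReal ((2:ℝ) ^ (-(n:ℝ))) := by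
    intro n j
    rw [Real.ediam_Icc]
    congr 1
    rw [Real.rpow_neg (by norm_num), Real.rpow_natCast]
    ring
  have htail := ENNReal.tendsto_sum_nat_add
    (fun n => ∑ j ∈ Finset.range (2 ^ n), W n j) hsum
  have hr : Tendsto (fun N : ℕ => ENNReal.ofReal ((2:ℝ) ^ (-(N:ℝ)))) atTop (𝓝 0) := by
    have h1 : Tendsto (fun N : ℕ => ((1/2:ℝ)) ^ N) atTop (𝓝 0) :=
      tendsto_pow_atTop_nhds_zero_of_lt_one (by norm_num) (by norm_num)
    have h2 := ENNReal.tendsto_ofReal h1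
    rw [ENNReal.ofReal_zero] at h2
    refine h2.congr fun N => ?_
    rw [Real.rpow_neg (by norm_num), Real.rpow_natCast]
    simp
  have key := Measure.hausdorffMeasure_le_liminf_tsum (l := atTop) s E _ hr t
    (Eventually.of_forall fun N i => by
      dsimp only [t]
      split_ifs
      · rw [hdiam]
        apply ENNReal.ofReal_le_ofReal
        apply Real.rpow_le_rpow_of_exponent_le (by norm_num)
        push_cast
        linarith [Nat.cast_nonneg (α := ℝ) i.1]
      · simp)
    (Eventually.of_forall fun N x hx => by
      obtain ⟨n, hn, j, hj, hG, hxj⟩ := (frequently_atTop.1 (hE x hx)) N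
      obtain ⟨k, rfl⟩ := Nat.exists_eq_add_of_le' hn
      refine mem_iUnion.2 ⟨⟨k, ⟨j, hj⟩⟩, ?_⟩
      simp only [t, if_pos hG]
      exact hxj)
  refine le_antisymm (key.trans ?_) zero_le
  refine le_trans (liminf_le_liminf (Eventually.of_forall fun N => ?_)) htail.liminf_eq.le
  rw [ENNReal.tsum_sigma']
  refine ENNReal.tsum_le_tsum fun k => ?_
  rw [tsum_fintype, Finset.sum_range]
  refine Finset.sum_le_sum fun j _ => ?_
  by_cases hG : G (k + N) j
  · simp only [t, if_pos hG]
    rw [hdiam, ENNReal.ofReal_rpow_of_pos (by positivity), ← Real.rpow_mul (by norm_num)]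
    exact hW _ _ j.2 hG
  · simp [t, if_neg hG, hs]

/-- The weights `2^(-ns) * (2^(n(δ + ε)) * |h(I)|)^η`, with `s = δ - δ²/4 + ε` and `η = 1 - δ/2`,
are almost surely summable over all dyadic intervals: generation `n` has expected total weight at
most `C * 2^(-nεδ/2)`. -/
lemma ae_sum_weight_ne_top {Ω : Type*} [MeasurableSpace Ω] (P : Measure Ω)
    (h : Ω → ℝ → ℝ) (hmeas : ∀ x : ℝ, Measurable fun ω => h ω x)
    (δ : ℝ) (hδ : δ ∈ Ioo (0:ℝ) 2) (C : ℝ)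
    (hmom : ∀ n j : ℕ, j < 2 ^ n →
      (∫⁻ ω, ENNReal.ofReal
          ((h ω (((j:ℝ) + 1) / 2 ^ n) - h ω ((j:ℝ) / 2 ^ n)) ^ (1 - δ/2)) ∂P) ≤
        ENNReal.ofReal (C * ((2:ℝ) ^ (-(n:ℝ))) ^ (2 * (1 - δ/2) - (1 - δ/2) ^ 2)))
    {ε : ℝ} (hε : 0 < ε) :
    ∀ᵐ ω ∂P, ∑' n : ℕ, ∑ j ∈ Finset.range (2 ^ n),
      ENNReal.ofReal ((2:ℝ) ^ (-(n:ℝ) * (δ - δ ^ 2 / 4 + ε) + n * (δ + ε) * (1 - δ/2))) *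
        ENNReal.ofReal
          ((h ω (((j:ℝ) + 1) / 2 ^ n) - h ω ((j:ℝ) / 2 ^ n)) ^ (1 - δ/2)) ≠ ∞ := by
  have hm : ∀ n j : ℕ, Measurable fun ω => ENNReal.ofReal
      ((h ω (((j:ℝ) + 1) / 2 ^ n) - h ω ((j:ℝ) / 2 ^ n)) ^ (1 - δ/2)) := fun n j =>
    (((hmeas _).sub (hmeas _)).pow_const _).ennreal_ofReal
  have hm' : ∀ n : ℕ, Measurable fun ω => ∑ j ∈ Finset.range (2 ^ n),
      ENNReal.ofReal ((2:ℝ) ^ (-(n:ℝ) * (δ - δ ^ 2 / 4 + ε) + n * (δ + ε) * (1 - δ/2))) *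
        ENNReal.ofReal
          ((h ω (((j:ℝ) + 1) / 2 ^ n) - h ω ((j:ℝ) / 2 ^ n)) ^ (1 - δ/2)) := fun n =>
    Finset.measurable_fun_sum _ fun j _ => (hm n j).const_mul _
  have hlt : ∫⁻ ω, ∑' n : ℕ, ∑ j ∈ Finset.range (2 ^ n),
      ENNReal.ofReal ((2:ℝ) ^ (-(n:ℝ) * (δ - δ ^ 2 / 4 + ε) + n * (δ + ε) * (1 - δ/2))) *
        ENNReal.ofReal
          ((h ω (((j:ℝ) + 1) / 2 ^ n) - h ω ((j:ℝ) / 2 ^ n)) ^ (1 - δ/2)) ∂P ≠ ∞ := by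
    rw [lintegral_tsum fun n => (hm' n).aemeasurable]
    have hr1 : (2:ℝ) ^ (-(ε * δ / 2)) < 1 :=
      Real.rpow_lt_one_of_one_lt_of_neg (by norm_num) (by nlinarith [mul_pos hε hδ.1])
    have hsumm : Summable fun n : ℕ => C * ((2:ℝ) ^ (-(ε * δ / 2))) ^ n :=
      (summable_geometric_of_lt_one (by positivity) hr1).mul_left C
    refine ne_top_of_le_ne_top hsumm.tsum_ofReal_ne_top (ENNReal.tsum_le_tsum fun n => ?_)
    rw [lintegral_finsetSum _ fun j _ => (hm n j).const_mul _]
    calc _ ≤ ∑ j ∈ Finset.range (2 ^ n),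
          ENNReal.ofReal ((2:ℝ) ^ (-(n:ℝ) * (δ - δ ^ 2 / 4 + ε) + n * (δ + ε) * (1 - δ/2))) *
          ENNReal.ofReal
            (C * ((2:ℝ) ^ (-(n:ℝ))) ^ (2 * (1 - δ/2) - (1 - δ/2) ^ 2)) := by
          refine Finset.sum_le_sum fun j hj => ?_
          rw [lintegral_const_mul _ (hm n j)]
          gcongr
          exact hmom n j (Finset.mem_range.1 hj)
      _ = _ := by
          rw [Finset.sum_const, Finset.card_range, nsmul_eq_mul,
            ← ENNReal.ofReal_mul (by positivity), ← ENNReal.ofReal_natCast,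
            ← ENNReal.ofReal_mul (by positivity)]
          congr 1
          rw [← Real.rpow_mul (by norm_num), ← Real.rpow_natCast (_ ^ (-(ε * δ / 2))),
            ← Real.rpow_mul (by norm_num),
            mul_left_comm _ C, mul_left_comm _ C, ← Real.rpow_add (by norm_num)]
          push_cast
          rw [← Real.rpow_natCast 2 n, ← Real.rpow_add (by norm_num)]
          congr 2
          ring
  exact (ae_lt_top (Measurable.tsum hm') hlt).mono fun ω hω => hω.ne

/-- The dimension bound under the moment hypothesis for dyadic intervals only, that is, for
natural numbers `j`. In `stmt12` the index `j` elaborates as a real number, so that theorem is a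
special case of this one. -/
theorem dimH_le_of_dyadic_moments {Ω : Type*} [MeasurableSpace Ω] (P : Measure Ω)
    (h : Ω → ℝ → ℝ)
    (hmeas : ∀ x : ℝ, Measurable fun ω => h ω x)
    (δ : ℝ) (hδ : δ ∈ Ioo (0:ℝ) 2) (C : ℝ)
    (hmom : ∀ n j : ℕ, j < 2 ^ n →
      (∫⁻ ω, ENNReal.ofReal
          ((h ω (((j:ℝ) + 1) / 2 ^ n) - h ω ((j:ℝ) / 2 ^ n)) ^ (1 - δ/2)) ∂P) ≤
        ENNReal.ofReal (C * ((2:ℝ) ^ (-(n:ℝ))) ^ (2 * (1 - δ/2) - (1 - δ/2) ^ 2))) :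
    ∀ᵐ ω ∂P,
      dimH {x ∈ Ico (0:ℝ) 1 | ∀ ε > (0:ℝ), ∃ᶠ n : ℕ in atTop,
          (2:ℝ) ^ (-(n:ℝ) * (δ + ε)) ≤ h ω (dyadRight n x) - h ω (dyadLeft n x)} ≤
        ENNReal.ofReal (δ - δ ^ 2 / 4) := by
  have hD : 0 < δ - δ ^ 2 / 4 := by nlinarith [hδ.1, hδ.2]
  have hη : 0 < 1 - δ / 2 := by linarith [hδ.2]
  have hεpos : ∀ m : ℕ, (0:ℝ) < 1 / ((m:ℝ) + 1) := fun m => by positivity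
  have hae := ae_all_iff.2 fun m : ℕ =>
    ae_sum_weight_ne_top P h hmeas δ hδ C hmom (hεpos m)
  filter_upwards [hae] with ω hω
  have hdim : ∀ m : ℕ, dimH {x ∈ Ico (0:ℝ) 1 | ∀ ε > (0:ℝ), ∃ᶠ n : ℕ in atTop,
      (2:ℝ) ^ (-(n:ℝ) * (δ + ε)) ≤ h ω (dyadRight n x) - h ω (dyadLeft n x)} ≤
        ENNReal.ofReal (δ - δ ^ 2 / 4 + 1 / ((m:ℝ) + 1)) := by
    intro m
    set ε : ℝ := 1 / ((m:ℝ) + 1) with hεdef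
    have hε : 0 < ε := hεpos m
    have hs : 0 < δ - δ ^ 2 / 4 + ε := by linarith
    refine dimH_le_of_hausdorffMeasure_ne_top (X := ℝ) (d := (δ - δ ^ 2 / 4 + ε).toNNReal) ?_
    rw [Real.coe_toNNReal _ hs.le, hausdorffMeasure_eq_zero_of_frequently_cover hs
      (fun n j => (2:ℝ) ^ (-(n:ℝ) * (δ + ε)) ≤
        h ω (((j:ℝ) + 1) / 2 ^ n) - h ω ((j:ℝ) / 2 ^ n)) _ _ ?_ ?_ (hω m)]
    · exact ENNReal.zero_ne_top
    · rintro x ⟨⟨hx0, hx1⟩, hx⟩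
      refine (hx ε hε).mono fun n hn => ?_
      have hp : (0:ℝ) < 2 ^ n := by positivity
      have hfl : ((⌊x * 2 ^ n⌋.toNat : ℕ) : ℝ) = (⌊x * 2 ^ n⌋ : ℝ) := by
        exact_mod_cast Int.toNat_of_nonneg (Int.floor_nonneg.2 (by positivity))
      refine ⟨⌊x * 2 ^ n⌋.toNat, ?_, ?_, ?_, ?_⟩
      · have : ((⌊x * 2 ^ n⌋.toNat : ℕ) : ℝ) < ((2 ^ n : ℕ) : ℝ) := by
          rw [hfl]
          push_cast
          exact (Int.floor_le _).trans_lt (by nlinarith)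
        exact_mod_cast this
      · simpa only [hfl, dyadRight, dyadLeft] using hn
      · rw [hfl, div_le_iff₀ hp]
        exact Int.floor_le _
      · rw [hfl, le_div_iff₀ hp]
        exact (Int.lt_floor_add_one _).le
    · intro n j _ hG
      rw [← ENNReal.ofReal_mul (by positivity)]
      apply ENNReal.ofReal_le_ofReal
      rw [Real.rpow_add (by norm_num), mul_assoc]
      refine le_mul_of_one_le_right (by positivity) ?_
      -- On a selected interval `|h(I)|^η ≥ 2^(-n(δ + ε)η)`, which cancels the compensating factor.
      calc (1:ℝ) = (2:ℝ) ^ (n * (δ + ε) * (1 - δ/2)) *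
            ((2:ℝ) ^ (-(n:ℝ) * (δ + ε))) ^ (1 - δ/2) := by
            rw [← Real.rpow_mul (by norm_num), ← Real.rpow_add (by norm_num)]
            rw [show (n:ℝ) * (δ + ε) * (1 - δ/2) + -(n:ℝ) * (δ + ε) * (1 - δ/2) = 0 by ring,
              Real.rpow_zero]
        _ ≤ _ := by gcongr
  have hlim : Tendsto (fun m : ℕ => ENNReal.ofReal (δ - δ ^ 2 / 4 + 1 / ((m:ℝ) + 1))) atTop
      (𝓝 (ENNReal.ofReal (δ - δ ^ 2 / 4))) := by
    apply ENNReal.tendsto_ofReal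
    simpa using (tendsto_one_div_add_atTop_nhds_zero_nat (𝕜 := ℝ)).const_add (δ - δ ^ 2 / 4)
  exact ge_of_tendsto' hlim hdim

/-- Multifractal upper bound (positive moments): let `h` be a random increasing homeomorphism
of `[0,1]`, `δ ∈ (0,2)`, `η := 1 - δ/2`, and assume `E[|h(I)|^η] ≤ C|I|^{2η-η²}` for every
dyadic interval `I`. Then a.s. the set of `x` with lower dyadic exponent at most `δ`
(i.e. `|h(I_n(x))| ≥ 2^{-n(δ+ε)}` infinitely often, for every `ε > 0`) has Hausdorff
dimension at most `δ - δ²/4`. -/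
theorem stmt12 {Ω : Type*} [MeasurableSpace Ω] (P : Measure Ω) [IsProbabilityMeasure P]
    (h : Ω → ℝ → ℝ)
    (hhomeo : ∀ ω, StrictMonoOn (h ω) (Icc 0 1) ∧ ContinuousOn (h ω) (Icc 0 1) ∧
      h ω 0 = 0 ∧ h ω 1 = 1)
    (hmeas : ∀ x : ℝ, Measurable fun ω => h ω x)
    (δ : ℝ) (hδ : δ ∈ Ioo (0:ℝ) 2) (C : ℝ) (hC : 0 < C)
    (hmom : ∀ n : ℕ, ∀ j < 2 ^ n,
      (∫⁻ ω, ENNReal.ofReal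
          ((h ω (((j:ℝ) + 1) / 2 ^ n) - h ω ((j:ℝ) / 2 ^ n)) ^ (1 - δ/2)) ∂P) ≤
        ENNReal.ofReal (C * ((2:ℝ) ^ (-(n:ℝ))) ^ (2 * (1 - δ/2) - (1 - δ/2) ^ 2))) :
    ∀ᵐ ω ∂P,
      dimH {x ∈ Ico (0:ℝ) 1 | ∀ ε > (0:ℝ), ∃ᶠ n : ℕ in atTop,
          (2:ℝ) ^ (-(n:ℝ) * (δ + ε)) ≤ h ω (dyadRight n x) - h ω (dyadLeft n x)} ≤
        ENNReal.ofReal (δ - δ ^ 2 / 4) := by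
  refine dimH_le_of_dyadic_moments P h hmeas δ hδ C fun n j hj => ?_
  -- The index in `hmom` is real: specialise it to the cast of `j`.
  exact hmom n j (by exact_mod_cast hj)
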